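/- The formal power series I(x) satisfies the differential equation x²·I′(x) = −I(x)² + (1+x)·I(x) − x in ℚ[[x]], where I′ denotes the formal derivative; equivalently, I′ = −x^{−2}I² + (x^{−2}+x^{−1})I − x^{−1}. -/

import Mathlib

def PlusIndec {n : ℕ} (π : Equiv.Perm (Fin n)) : Prop :=
  ¬ ∃ k : ℕ, 1 ≤ k ∧ k < n ∧
    (Finset.univ.filter fun i : Fin n => (i : ℕ) < k).image π =
      Finset.univ.filter fun i : Fin n => (i : ℕ) < k

noncomputable def plusIndecCount (n : ℕ) : ℕ :=
  Nat.card {π : Equiv.Perm (Fin n) // PlusIndec π}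

noncomputable def Ips : PowerSeries ℚ :=
  PowerSeries.mk fun k => if k = 0 then 0 else (plusIndecCount k : ℚ)

/-- `π` maps the first `k` points into themselves. -/
def PrefStable {n : ℕ} (π : Equiv.Perm (Fin n)) (k : ℕ) : Prop :=
  ∀ i : Fin n, (i : ℕ) < k → ((π i : Fin n) : ℕ) < k

theorem prefStable_iff {n : ℕ} (π : Equiv.Perm (Fin n)) (k : ℕ) :
    PrefStable π k ↔ (Finset.univ.filter fun i : Fin n => (i : ℕ) < k).image π =
      Finset.univ.filter fun i : Fin n => (i : ℕ) < k := by
  constructor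
  · intro h
    apply Finset.eq_of_subset_of_card_le
    · intro x hx
      simp only [Finset.mem_image, Finset.mem_filter, Finset.mem_univ, true_and] at hx ⊢
      obtain ⟨i, hi, rfl⟩ := hx
      exact h i hi
    · rw [Finset.card_image_of_injective _ π.injective]
  · intro h i hi
    have : π i ∈ (Finset.univ.filter fun i : Fin n => (i : ℕ) < k).image π :=
      Finset.mem_image_of_mem _ (by simpa using hi)
    rw [h] at this
    simpa using this

theorem plusIndec_iff {n : ℕ} (π : Equiv.Perm (Fin n)) :
    PlusIndec π ↔ ∀ j, 1 ≤ j → j < n → ¬ PrefStable π j := by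
  unfold PlusIndec
  simp only [← prefStable_iff]
  push Not
  rfl

/-- Direct sum of permutations. -/
def dsum {k m : ℕ} (p : Equiv.Perm (Fin k) × Equiv.Perm (Fin m)) : Equiv.Perm (Fin (k + m)) :=
  finSumFinEquiv.permCongr (Equiv.Perm.sumCongrHom (Fin k) (Fin m) p)

theorem dsum_injective {k m : ℕ} : Function.Injective (dsum (k := k) (m := m)) := by
  intro a b h
  exact Equiv.Perm.sumCongrHom_injective (finSumFinEquiv.permCongr.injective h)

theorem dsum_castAdd {k m : ℕ} (p : Equiv.Perm (Fin k) × Equiv.Perm (Fin m)) (i : Fin k) :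
    dsum p (Fin.castAdd m i) = Fin.castAdd m (p.1 i) := by
  simp [dsum, Equiv.permCongr_apply]

theorem prefStable_dsum {k m : ℕ} (p : Equiv.Perm (Fin k) × Equiv.Perm (Fin m)) (j : ℕ)
    (hj : j ≤ k) : PrefStable (dsum p) j ↔ PrefStable p.1 j := by
  constructor
  · intro h i hi
    have := h (Fin.castAdd m i) (by simpa using hi)
    rw [dsum_castAdd] at this
    simpa using this
  · intro h i hi
    have e : i = Fin.castAdd m ⟨i, by omega⟩ := by ext; simp
    rw [e, dsum_castAdd]
    exact h _ hi

theorem exists_dsum {k m : ℕ} (π : Equiv.Perm (Fin (k + m))) (h : PrefStable π k) :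
    ∃ p, dsum p = π := by
  have hm : Set.MapsTo (finSumFinEquiv.symm.permCongr π : Equiv.Perm (Fin k ⊕ Fin m))
      (Set.range Sum.inl) (Set.range Sum.inl) := by
    rintro _ ⟨i, rfl⟩
    have h1 := h (Fin.castAdd m i) (by simp)
    refine ⟨⟨_, h1⟩, ?_⟩
    rw [Equiv.permCongr_apply]
    apply finSumFinEquiv.injective
    ext
    simp
  obtain ⟨p, hp⟩ := Equiv.Perm.mem_sumCongrHom_range_of_perm_mapsTo_inl hm
  refine ⟨p, ?_⟩
  unfold dsum
  rw [hp]
  ext x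
  simp [Equiv.permCongr_apply]

theorem card_first (k m : ℕ) :
    Nat.card {π : Equiv.Perm (Fin (k + m)) //
      PrefStable π k ∧ ∀ j, 1 ≤ j → j < k → ¬ PrefStable π j} =
    plusIndecCount k * m.factorial := by
  have e : Nat.card ({σ : Equiv.Perm (Fin k) // PlusIndec σ} × Equiv.Perm (Fin m)) =
      plusIndecCount k * m.factorial := by
    rw [Nat.card_prod, plusIndecCount, Nat.card_perm, Nat.card_fin]
  rw [← e]
  symm
  refine Nat.card_congr (Equiv.ofBijective (fun p => ⟨dsum (p.1.1, p.2), ?_, ?_⟩) ⟨?_, ?_⟩)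
  · rw [prefStable_dsum _ _ le_rfl]
    intro i _
    exact (p.1.1 i).2
  · intro j h1 h2
    rw [prefStable_dsum _ _ h2.le]
    exact (plusIndec_iff _).1 p.1.2 j h1 h2
  · rintro ⟨⟨a, ha⟩, b⟩ ⟨⟨c, hc⟩, d⟩ h
    have := dsum_injective (Subtype.mk.inj h)
    simp only [Prod.mk.injEq] at this
    obtain ⟨rfl, rfl⟩ := this
    rfl
  · rintro ⟨π, h1, h2⟩
    obtain ⟨p, rfl⟩ := exists_dsum π h1
    refine ⟨(⟨p.1, (plusIndec_iff _).2 fun j hj hk => ?_⟩, p.2), rfl⟩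
    rw [← prefStable_dsum p _ hk.le]
    exact h2 j hj hk

theorem exists_first {n : ℕ} (hn : 1 ≤ n) (π : Equiv.Perm (Fin n)) :
    ∃ k, 1 ≤ k ∧ k ≤ n ∧ PrefStable π k ∧ ∀ j, 1 ≤ j → j < k → ¬ PrefStable π j := by
  classical
  have hex : ∃ k, 1 ≤ k ∧ PrefStable π k := ⟨n, hn, fun i _ => (π i).2⟩
  refine ⟨Nat.find hex, (Nat.find_spec hex).1, ?_, (Nat.find_spec hex).2, ?_⟩
  · exact Nat.find_min' hex ⟨hn, fun i _ => (π i).2⟩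
  · intro j h1 h2 h3
    exact Nat.find_min hex h2 ⟨h1, h3⟩

theorem factorial_rec (n : ℕ) (hn : 1 ≤ n) :
    n.factorial = ∑ p ∈ Finset.HasAntidiagonal.antidiagonal n,
      (if p.1 = 0 then 0 else plusIndecCount p.1) * p.2.factorial := by
  classical
  choose f hf1 hf2 hf3 hf4 using fun π : Equiv.Perm (Fin n) => exists_first hn π
  have key : ∀ (π : Equiv.Perm (Fin n)) (k : ℕ), 1 ≤ k →
      (f π = k ↔ PrefStable π k ∧ ∀ j, 1 ≤ j → j < k → ¬ PrefStable π j) := by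
    intro π k hk
    constructor
    · rintro rfl
      exact ⟨hf3 π, hf4 π⟩
    · rintro ⟨h1, h2⟩
      rcases lt_trichotomy (f π) k with h | h | h
      · exact absurd (hf3 π) (h2 _ (hf1 π) h)
      · exact h
      · exact absurd h1 (hf4 π _ hk h)
  have hc : n.factorial = (Finset.univ : Finset (Equiv.Perm (Fin n))).card := by
    rw [Finset.card_univ, Fintype.card_perm, Fintype.card_fin]
  rw [hc, Finset.card_eq_sum_card_fiberwise (f := fun π => (f π, n - f π))
    (t := Finset.HasAntidiagonal.antidiagonal n)]
  · apply Finset.sum_congr rfl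
    rintro ⟨k, m⟩ hkm
    rw [Finset.HasAntidiagonal.mem_antidiagonal] at hkm
    dsimp only at hkm ⊢
    split_ifs with h0
    · rw [zero_mul, Finset.card_eq_zero, Finset.filter_eq_empty_iff]
      intro π _ h
      have := hf1 π
      have := congrArg Prod.fst h
      dsimp only at this
      omega
    · subst hkm
      rw [← card_first, Nat.card_eq_fintype_card, Fintype.card_subtype]
      congr 1
      ext π
      simp only [Finset.mem_filter, Finset.mem_univ, true_and]
      rw [← key π k (by omega), Prod.mk.injEq]
      constructor
      · exact fun h => h.1
      · exact fun h => ⟨h, by omega⟩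
  · intro π _
    have := hf2 π
    simp only [Finset.mem_coe, Finset.HasAntidiagonal.mem_antidiagonal]
    omega

/-- The generating series of all permutations. -/
def Fps : PowerSeries ℚ := PowerSeries.mk fun n => (n.factorial : ℚ)

theorem Fps_eq : Fps = 1 + Ips * Fps := by
  ext n
  rw [map_add, PowerSeries.coeff_mul, PowerSeries.coeff_one]
  simp only [Fps, Ips, PowerSeries.coeff_mk]
  rcases Nat.eq_zero_or_pos n with rfl | hn
  · simp
  · rw [if_neg (by omega), zero_add]
    conv_lhs => rw [factorial_rec n hn]
    push_cast
    rfl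

theorem Fps_ode : PowerSeries.X ^ 2 * PowerSeries.derivativeFun Fps =
    (1 - PowerSeries.X) * Fps - 1 := by
  ext n
  rw [sub_mul, one_mul, map_sub, map_sub, PowerSeries.coeff_one, pow_two, mul_assoc]
  rcases n with _ | _ | n
  · simp [Fps]
  · rw [PowerSeries.coeff_succ_X_mul, PowerSeries.coeff_succ_X_mul]
    simp [Fps]
  · rw [PowerSeries.coeff_succ_X_mul, PowerSeries.coeff_succ_X_mul,
      PowerSeries.coeff_succ_X_mul, show PowerSeries.derivativeFun Fps = PowerSeries.derivative ℚ Fps from rfl, PowerSeries.coeff_derivative]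
    simp only [Fps, PowerSeries.coeff_mk, Nat.factorial_succ]
    push_cast
    simp
    ring

/-- `x²·I′(x) = -I(x)² + (1+x)·I(x) - x` in `ℚ[[x]]`, i.e.
`I′ = -x⁻²I² + (x⁻²+x⁻¹)I - x⁻¹`. -/
theorem I_differential_equation :
    PowerSeries.X ^ 2 * PowerSeries.derivativeFun Ips =
      -(Ips ^ 2) + (1 + PowerSeries.X) * Ips - PowerSeries.X := by
  have h1 := Fps_eq
  have h2 := Fps_ode
  have h3 : PowerSeries.derivativeFun Fps =
      Ips * PowerSeries.derivativeFun Fps + Fps * PowerSeries.derivativeFun Ips := by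
    conv_lhs => rw [h1]
    rw [PowerSeries.derivativeFun_add, PowerSeries.derivativeFun_mul,
      PowerSeries.derivativeFun_one]
    simp [smul_eq_mul]
  have h4 : (1 - Ips) * Fps = 1 := by linear_combination h1
  generalize PowerSeries.derivativeFun Fps = dF at *
  generalize PowerSeries.derivativeFun Ips = dI at *
  generalize Fps = F at *
  generalize Ips = I at *
  generalize (PowerSeries.X : PowerSeries ℚ) = x at *
  -- `F dI = (1 - I) dF`, so `dI = (1 - I)^2 dF`
  have h5 : dI = (1 - I) ^ 2 * dF := by
    linear_combination (-dI) * h4 - (1 - I) * h3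
  rw [h5]
  linear_combination (1 - I) ^ 2 * h2 + (1 - x) * (1 - I) * h4
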